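/- For all indices i, j ∈ {1,2,3}, the Laplace–Runge–Lenz vector transforms as a vector under rotations in the Poisson sense: {A_i, L_j}(r,v) = Σ_k ε_{ijk} A_k(r,v) for all (r,v) with r ≠ 0. -/

import Mathlib

noncomputable section

/-- Physical 3-space. -/
abbrev E3 : Type := EuclideanSpace ℝ (Fin 3)

/-- Build a vector in `E3` from its components. -/
def toE3 (f : Fin 3 → ℝ) : E3 := (EuclideanSpace.equiv (Fin 3) ℝ).symm f

/-- Cross product in `ℝ³`. -/
def cross (a b : E3) : E3 :=
  toE3 ![a 1 * b 2 - a 2 * b 1, a 2 * b 0 - a 0 * b 2, a 0 * b 1 - a 1 * b 0]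

/-- Dot product in `ℝ³`. -/
def dot (a b : E3) : ℝ := ∑ i, a i * b i

/-- Gradient in the `r` variable of a function on phase space. -/
def gradR (F : E3 × E3 → ℝ) (p : E3 × E3) : E3 := gradient (fun x => F (x, p.2)) p.1

/-- Gradient in the `v` variable of a function on phase space. -/
def gradV (F : E3 × E3 → ℝ) (p : E3 × E3) : E3 := gradient (fun y => F (p.1, y)) p.2

/-- Poisson bracket of two functions on phase space. -/
def pb (F G : E3 × E3 → ℝ) (p : E3 × E3) : ℝ :=
  dot (gradR F p) (gradV G p) - dot (gradR G p) (gradV F p)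

/-- Energy `E(r,v) = (1/2)‖v‖² − κ/‖r‖`. -/
def energy (κ : ℝ) (p : E3 × E3) : ℝ := (1/2) * ‖p.2‖^2 - κ / ‖p.1‖

/-- Angular momentum `L(r,v) = r × v`. -/
def angMom (p : E3 × E3) : E3 := cross p.1 p.2

/-- Laplace–Runge–Lenz vector `A(r,v) = v × L − κ r/‖r‖`. -/
def lrl (κ : ℝ) (p : E3 × E3) : E3 := cross p.2 (angMom p) - (κ / ‖p.1‖) • p.1

/-- LRL direction vector `Θ = A/‖A‖`. -/
def lrlDir (κ : ℝ) (p : E3 × E3) : E3 := ‖lrl κ p‖⁻¹ • lrl κ p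

/-- Levi-Civita symbol `ε_{ijk}` on indices in `{0,1,2}`. -/
def eps (i j k : Fin 3) : ℝ :=
  (((j : ℕ) : ℝ) - ((i : ℕ) : ℝ)) * (((k : ℕ) : ℝ) - ((i : ℕ) : ℝ))
    * (((k : ℕ) : ℝ) - ((j : ℕ) : ℝ)) / 2

/-!
The bracket `{F, n · L}` is the derivative of `F` along the infinitesimal rotation
`(r, v) ↦ (n × r, n × v)`, since `∇_v (n · L) = n × r` and `∇_r (n · L) = -(n × v)`. Say that a
vector observable transforms as a vector if its derivative in this direction is `n × F` for all `n`,
and that a scalar observable is invariant if its derivative in this direction vanishes. By the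
product rule and the Jacobi identity for `×`, vectors are closed under cross products, and under
multiplication by invariant scalars such as functions of `‖r‖`. As `r` and `v` are vectors, so is
`A = v × (r × v) - (κ / ‖r‖) r`.
-/

section CrossProduct

open Matrix

variable (a b c : E3)

lemma cross_eq_toLp_crossProduct : cross a b = WithLp.toLp 2 (a.ofLp ⨯₃ b.ofLp) := by
  rw [cross_apply]
  rfl

lemma dot_eq_inner : dot a b = inner ℝ a b := by
  simp [dot, PiLp.inner_apply, mul_comm]

lemma inner_eq_dotProduct : inner ℝ a b = a.ofLp ⬝ᵥ b.ofLp := by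
  rw [← dot_eq_inner]
  rfl

lemma inner_cross_permutation : inner ℝ a (cross b c) = inner ℝ b (cross c a) := by
  simpa only [inner_eq_dotProduct, cross_eq_toLp_crossProduct] using
    triple_product_permutation a.ofLp b.ofLp c.ofLp

lemma neg_cross_swap : -cross a b = cross b a := by
  simp only [cross_eq_toLp_crossProduct, ← WithLp.toLp_neg, cross_anticomm]

lemma cross_leibniz : cross a (cross b c) = cross (cross a b) c + cross b (cross a c) := by
  simp only [cross_eq_toLp_crossProduct, ← WithLp.toLp_add, ← leibniz_cross]

lemma inner_cross_left : inner ℝ (cross a b) c = -inner ℝ b (cross a c) := by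
  rw [real_inner_comm, inner_cross_permutation c, inner_cross_permutation a, ← neg_cross_swap a c,
    inner_neg_right]

/-- The cross product as a continuous bilinear map, giving access to the product rule. -/
def crossL : E3 →L[ℝ] E3 →L[ℝ] E3 :=
  ((crossProduct.compl₁₂ (WithLp.linearEquiv 2 ℝ (Fin 3 → ℝ)).toLinearMap
    (WithLp.linearEquiv 2 ℝ (Fin 3 → ℝ)).toLinearMap).compr₂
      (WithLp.linearEquiv 2 ℝ (Fin 3 → ℝ)).symm.toLinearMap).toContinuousBilinearMap

lemma crossL_apply : crossL a b = cross a b :=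
  (cross_eq_toLp_crossProduct a b).symm

lemma sum_eps_mul (i j : Fin 3) :
    ∑ k, eps i j k * a k = cross (EuclideanSpace.single j 1) a i := by
  rw [cross_eq_toLp_crossProduct]
  fin_cases i <;> fin_cases j <;> simp [cross_apply, eps, Fin.sum_univ_three] <;> norm_num

end CrossProduct

/-- The velocity at `p = (r, v)` of the simultaneous rotation of `r` and `v` with angular
velocity `n`. -/
def infinitesimalRotation (n : E3) (p : E3 × E3) : E3 × E3 := (cross n p.1, cross n p.2)

lemma gradient_inner_const_left {E : Type*} [NormedAddCommGroup E] [InnerProductSpace ℝ E]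
    [CompleteSpace E] (a x : E) : gradient (fun y => inner ℝ a y) x = a :=
  (hasGradientAt_iff_hasFDerivAt.mpr (InnerProductSpace.toDual ℝ E a).hasFDerivAt).gradient

lemma gradV_inner_angMom (n : E3) (p : E3 × E3) :
    gradV (fun q => inner ℝ n (angMom q)) p = cross n p.1 := by
  have h (y : E3) : inner ℝ n (angMom (p.1, y)) = inner ℝ (cross n p.1) y := by
    rw [real_inner_comm y, inner_cross_permutation y]
    rfl
  simp only [gradV, h, gradient_inner_const_left]

lemma gradR_inner_angMom (n : E3) (p : E3 × E3) :
    gradR (fun q => inner ℝ n (angMom q)) p = -cross n p.2 := by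
  have h (x : E3) : inner ℝ n (angMom (x, p.2)) = inner ℝ (-cross n p.2) x := by
    rw [real_inner_comm x, neg_cross_swap, ← inner_cross_permutation n]
    rfl
  simp only [gradR, h, gradient_inner_const_left]

lemma inner_gradR {F : E3 × E3 → ℝ} {p : E3 × E3} (hF : DifferentiableAt ℝ F p) (w : E3) :
    inner ℝ (gradR F p) w = fderiv ℝ F p (w, 0) := by
  have h : HasFDerivAt (fun x => F (x, p.2)) _ p.1 :=
    hF.hasFDerivAt.comp p.1 (hasFDerivAt_prodMk_left p.1 p.2)
  rw [gradR, inner_gradient_left, h.fderiv]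
  simp

lemma inner_gradV {F : E3 × E3 → ℝ} {p : E3 × E3} (hF : DifferentiableAt ℝ F p) (w : E3) :
    inner ℝ (gradV F p) w = fderiv ℝ F p (0, w) := by
  have h : HasFDerivAt (fun y => F (p.1, y)) _ p.2 :=
    hF.hasFDerivAt.comp p.2 (hasFDerivAt_prodMk_right p.1 p.2)
  rw [gradV, inner_gradient_left, h.fderiv]
  simp

lemma pb_inner_angMom {F : E3 × E3 → ℝ} {p : E3 × E3} (hF : DifferentiableAt ℝ F p) (n : E3) :
    pb F (fun q => inner ℝ n (angMom q)) p = fderiv ℝ F p (infinitesimalRotation n p) := by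
  rw [pb, gradV_inner_angMom, gradR_inner_angMom, dot_eq_inner, dot_eq_inner, inner_neg_left,
    sub_neg_eq_add, real_inner_comm (gradV F p), inner_gradR hF, inner_gradV hF, ← map_add,
    Prod.mk_add_mk, add_zero, zero_add, infinitesimalRotation]

/-- The scalar observable `f` is differentiable at `p` and invariant to first order under
rotations. -/
structure IsScalarAt (f : E3 × E3 → ℝ) (p : E3 × E3) : Prop where
  differentiableAt : DifferentiableAt ℝ f p
  fderiv_infinitesimalRotation (n : E3) : fderiv ℝ f p (infinitesimalRotation n p) = 0

/-- The observable `F` is differentiable at `p` and, to first order, rotates along with `(r, v)`: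
it transforms as a vector under rotations. -/
structure IsVectorAt (F : E3 × E3 → E3) (p : E3 × E3) : Prop where
  differentiableAt : DifferentiableAt ℝ F p
  fderiv_infinitesimalRotation (n : E3) : fderiv ℝ F p (infinitesimalRotation n p) = cross n (F p)

lemma IsScalarAt.comp {f : E3 × E3 → ℝ} {p : E3 × E3} {g : ℝ → ℝ}
    (hf : IsScalarAt f p) (hg : DifferentiableAt ℝ g (f p)) : IsScalarAt (fun q => g (f q)) p where
  differentiableAt := hg.comp p hf.differentiableAt
  fderiv_infinitesimalRotation n := by
    rw [fderiv_fun_comp p hg hf.differentiableAt, ContinuousLinearMap.comp_apply,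
      hf.fderiv_infinitesimalRotation, map_zero]

lemma IsScalarAt.smul {f : E3 × E3 → ℝ} {F : E3 × E3 → E3} {p : E3 × E3}
    (hf : IsScalarAt f p) (hF : IsVectorAt F p) : IsVectorAt (fun q => f q • F q) p where
  differentiableAt := hf.differentiableAt.smul hF.differentiableAt
  fderiv_infinitesimalRotation n := by
    rw [fderiv_fun_smul hf.differentiableAt hF.differentiableAt]
    simp [hf.fderiv_infinitesimalRotation, hF.fderiv_infinitesimalRotation, ← crossL_apply]

lemma isVectorAt_fst (p : E3 × E3) : IsVectorAt Prod.fst p where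
  differentiableAt := differentiableAt_fst
  fderiv_infinitesimalRotation n := by rw [fderiv_fst]; rfl

lemma isVectorAt_snd (p : E3 × E3) : IsVectorAt Prod.snd p where
  differentiableAt := differentiableAt_snd
  fderiv_infinitesimalRotation n := by rw [fderiv_snd]; rfl

namespace IsVectorAt

variable {F G : E3 × E3 → E3} {p : E3 × E3}

protected lemma sub (hF : IsVectorAt F p) (hG : IsVectorAt G p) :
    IsVectorAt (fun q => F q - G q) p where
  differentiableAt := hF.differentiableAt.sub hG.differentiableAt
  fderiv_infinitesimalRotation n := by
    rw [fderiv_fun_sub hF.differentiableAt hG.differentiableAt, sub_apply,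
      hF.fderiv_infinitesimalRotation, hG.fderiv_infinitesimalRotation]
    simp only [← crossL_apply, map_sub]

protected lemma cross (hF : IsVectorAt F p) (hG : IsVectorAt G p) :
    IsVectorAt (fun q => cross (F q) (G q)) p where
  differentiableAt := by
    simp only [← crossL_apply]
    exact (crossL.hasFDerivAt_of_bilinear hF.differentiableAt.hasFDerivAt
      hG.differentiableAt.hasFDerivAt).differentiableAt
  fderiv_infinitesimalRotation n := by
    rw [cross_leibniz, add_comm, ← hF.fderiv_infinitesimalRotation,
      ← hG.fderiv_infinitesimalRotation]
    simp only [← crossL_apply]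
    rw [crossL.fderiv_of_bilinear hF.differentiableAt hG.differentiableAt]
    rfl

protected lemma inner (hF : IsVectorAt F p) (hG : IsVectorAt G p) :
    IsScalarAt (fun q => inner ℝ (F q) (G q)) p where
  differentiableAt := hF.differentiableAt.inner ℝ hG.differentiableAt
  fderiv_infinitesimalRotation n := by
    rw [fderiv_inner_apply ℝ hF.differentiableAt hG.differentiableAt,
      hF.fderiv_infinitesimalRotation, hG.fderiv_infinitesimalRotation, inner_cross_left,
      add_neg_cancel]

protected lemma norm (hF : IsVectorAt F p) (h0 : F p ≠ 0) : IsScalarAt (fun q => ‖F q‖) p := by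
  simp only [norm_eq_sqrt_real_inner]
  exact (hF.inner hF).comp (Real.hasDerivAt_sqrt (inner_self_ne_zero.mpr h0)).differentiableAt

protected lemma pb_inner_angMom (hF : IsVectorAt F p) (m n : E3) :
    pb (fun q => inner ℝ m (F q)) (fun q => inner ℝ n (angMom q)) p
      = inner ℝ m (cross n (F p)) := by
  have hm : HasFDerivAt (fun q => inner ℝ m (F q)) ((innerSL ℝ m).comp (fderiv ℝ F p)) p :=
    (innerSL ℝ m).hasFDerivAt.comp p hF.differentiableAt.hasFDerivAt
  rw [pb_inner_angMom hm.differentiableAt, hm.fderiv, ContinuousLinearMap.comp_apply,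
    hF.fderiv_infinitesimalRotation, innerSL_apply_apply]

lemma pb_angMom (hF : IsVectorAt F p) (i j : Fin 3) :
    pb (fun q => F q i) (fun q => angMom q j) p = ∑ k, eps i j k * F p k := by
  simpa [EuclideanSpace.inner_single_left, sum_eps_mul] using
    hF.pb_inner_angMom (EuclideanSpace.single i 1) (EuclideanSpace.single j 1)

end IsVectorAt

lemma isVectorAt_angMom (p : E3 × E3) : IsVectorAt angMom p :=
  (isVectorAt_fst p).cross (isVectorAt_snd p)

lemma isVectorAt_lrl (κ : ℝ) {p : E3 × E3} (hp : p.1 ≠ 0) : IsVectorAt (lrl κ) p := by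
  have hκ : IsScalarAt (fun q => κ / ‖q.1‖) p :=
    ((isVectorAt_fst p).norm hp).comp (g := fun s => κ / s) (by fun_prop (disch := simpa using hp))
  exact ((isVectorAt_snd p).cross (isVectorAt_angMom p)).sub (hκ.smul (isVectorAt_fst p))

theorem poisson_lrl_angMom_general (κ : ℝ) (i j : Fin 3) (r v : E3) (hr : r ≠ 0) :
    pb (fun p => lrl κ p i) (fun p => angMom p j) (r, v)
      = ∑ k, eps i j k * lrl κ (r, v) k :=
  (isVectorAt_lrl κ hr).pb_angMom i j

/-- The LRL vector transforms as a vector under rotations in the Poisson sense: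
`{A_i, L_j}(r,v) = Σ_k ε_{ijk} A_k(r,v)` for all `(r,v)` with `r ≠ 0`. -/
theorem poisson_lrl_angMom (κ : ℝ) (hκ : 0 < κ) (i j : Fin 3)
    (r v : E3) (hr : r ≠ 0) :
    pb (fun p => lrl κ p i) (fun p => angMom p j) (r, v)
      = ∑ k, eps i j k * lrl κ (r, v) k :=
  poisson_lrl_angMom_general κ i j r v hr
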